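/- Let k ≥ 4 and m ≥ 1, and let G be an edge-colored graph on n ≥ km vertices. If e(G) + c(G) ≥ ((n - k(m-1)) choose 2) + t_{n-k(m-1), k-2} + 2 + k(m-1)(2n-1) - k^2 (m-1)^2, then G contains m pairwise vertex-disjoint rainbow copies of K_k. -/

import Mathlib

/-- `t_{n,r}`: the number of edges of the Turán graph, i.e. the complete `r`-partite
graph on `n` vertices with part sizes as balanced as possible. -/
noncomputable def turanEdges (n r : ℕ) : ℕ := Nat.card (SimpleGraph.turanGraph n r).edgeSet

/-- `S` is the vertex set of a rainbow clique of `G`: the vertices of `S` are pairwise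
adjacent and the coloring `C` is injective on the edges spanned by `S`. -/
def IsRainbowClique {V : Type*} (G : SimpleGraph V) (C : Sym2 V → ℕ) (S : Finset V) : Prop :=
  (∀ u ∈ S, ∀ v ∈ S, u ≠ v → G.Adj u v) ∧
  (∀ u ∈ S, ∀ v ∈ S, ∀ x ∈ S, ∀ y ∈ S, u ≠ v → x ≠ y →
    C s(u, v) = C s(x, y) → s(u, v) = s(x, y))


section aux
open Finset

lemma te_eq (n r : ℕ) : turanEdges n r = (SimpleGraph.turanGraph n r).edgeFinset.card := by
  unfold turanEdges
  rw [Nat.card_eq_fintype_card, SimpleGraph.edgeFinset_card]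

lemma te_small (n r : ℕ) (h : n ≤ r) : turanEdges n r = n.choose 2 := by
  have : SimpleGraph.turanGraph n r = ⊤ := SimpleGraph.turanGraph_eq_top.2 (Or.inr h)
  unfold turanEdges
  rw [this, Nat.card_eq_fintype_card, ← SimpleGraph.edgeFinset_card,
    SimpleGraph.card_edgeFinset_top_eq_card_choose_two, Fintype.card_fin]

lemma te_succ (r : ℕ) (hr : 1 ≤ r) (n : ℕ) :
    turanEdges (n + 1) r + n / r = turanEdges n r + n := by
  induction n using Nat.strong_induction_on with
  | _ n ih =>
    rcases lt_or_ge n r with h | h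
    · rw [te_small _ _ h, te_small _ _ h.le, Nat.div_eq_of_lt h, Nat.choose_succ_succ' n 1]
      simp; omega
    · obtain ⟨m, rfl⟩ := Nat.exists_eq_add_of_le' h
      have := ih m (by omega)
      have h1 := SimpleGraph.card_edgeFinset_turanGraph_add (n := m) (r := r)
      have h2 := SimpleGraph.card_edgeFinset_turanGraph_add (n := m + 1) (r := r)
      simp only [← te_eq] at h1 h2
      rw [show m + r + 1 = m + 1 + r by ring, h1, h2, Nat.add_div_right _ (by omega)]
      obtain ⟨r, rfl⟩ := Nat.exists_eq_add_of_le' hr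
      simp at *
      nlinarith

lemma te_base (r : ℕ) (hr : 2 ≤ r) : turanEdges (r + 2) r + 2 = (r + 2).choose 2 := by
  have h0 := te_small r r le_rfl
  have h1 := te_succ r (by omega) r
  have h2 := te_succ r (by omega) (r + 1)
  have h3 : (r + 1) / r = 1 := by
    rw [Nat.div_eq_iff (by omega)]; omega
  rw [h3] at h2
  rw [Nat.div_self (by omega)] at h1
  have e1 := Nat.choose_succ_succ' r 1
  have e2 := Nat.choose_succ_succ' (r + 1) 1
  simp at e1 e2
  have e3 : r + 1 + 1 = r + 2 := rfl
  rw [e3] at *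
  omega

/-- selection of a low-weight transitive sequence -/
lemma selection {V : Type*} [DecidableEq V] (U : Finset V) (D : V → Finset V) (f : V → ℕ)
    (p r : ℕ) (hn : r * p + 1 ≤ U.card) (hD : ∀ v ∈ U, D v ⊆ U)
    (hc : ∀ v ∈ U, U.card ≤ (D v).card + p) (i : ℕ) (hi : i ≤ r) :
    ∃ (v : ℕ → V) (N : Finset V), N ⊆ U ∧ N.card + i * p = U.card ∧
      (∀ a b, a < b → b < i → v b ∈ D (v a)) ∧ (∀ a < i, v a ∈ U ∧ N ⊆ D (v a)) ∧
      p * (∑ a ∈ range i, f (v a)) + ∑ u ∈ N, f u ≤ ∑ u ∈ U, f u ∧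
      ∀ u ∈ N, ∑ a ∈ range i, f (v a) ≤ i * f u := by
  induction i with
  | zero =>
    obtain ⟨x, hx⟩ : U.Nonempty := card_pos.1 (by omega)
    exact ⟨fun _ => x, U, by simp⟩
  | succ i ih =>
    obtain ⟨v, N, hNU, hNc, h1, h2, h3, h4⟩ := ih (by omega)
    have hip : (i + 1) * p ≤ r * p := Nat.mul_le_mul_right _ hi
    have hNp : p + 1 ≤ N.card := by rw [add_mul] at hip; omega
    obtain ⟨x, hxN, hx⟩ := exists_min_image N f (card_pos.1 (by omega))
    have hcard : N.card - p ≤ (N ∩ D x).card := by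
      have e1 := card_inter_add_card_union N (D x)
      have e2 : (N ∪ D x).card ≤ U.card :=
        card_le_card (union_subset hNU (hD x (hNU hxN)))
      have e3 := hc x (hNU hxN)
      omega
    obtain ⟨M, hM, hMc⟩ := exists_subset_card_eq hcard
    have hMN : M ⊆ N := hM.trans inter_subset_left
    have hMD : M ⊆ D x := hM.trans inter_subset_right
    have hsum : ∑ a ∈ range (i + 1), f (Function.update v i x a)
        = ∑ a ∈ range i, f (v a) + f x := by
      rw [sum_range_succ, Function.update_self]
      congr 1
      apply sum_congr rfl
      intro a ha
      rw [Function.update_of_ne (by simp at ha; omega)]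
    refine ⟨Function.update v i x, M, hMN.trans hNU, ?_, ?_, ?_, ?_, ?_⟩
    · rw [add_mul]; omega
    · intro a b hab hb
      rw [Function.update_of_ne (by omega : a ≠ i)]
      rcases eq_or_ne b i with rfl | hbi
      · rw [Function.update_self]; exact (h2 a hab).2 hxN
      · rw [Function.update_of_ne hbi]; exact h1 a b hab (by omega)
    · intro a ha
      rcases eq_or_ne a i with rfl | hai
      · rw [Function.update_self]; exact ⟨hNU hxN, hMD⟩
      · rw [Function.update_of_ne hai]
        exact ⟨(h2 a (by omega)).1, hMN.trans (h2 a (by omega)).2⟩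
    · rw [hsum]
      have e1 := sum_sdiff (f := f) hMN
      have e2 : (N \ M).card * f x ≤ ∑ u ∈ N \ M, f u := by
        rw [← smul_eq_mul]
        exact card_nsmul_le_sum _ _ _ (fun u hu => hx u (mem_sdiff.1 hu).1)
      have e3 : (N \ M).card = p := by rw [card_sdiff_of_subset hMN]; omega
      rw [e3] at e2
      rw [mul_add]; omega
    · intro u hu
      rw [hsum, add_mul]
      have := h4 u (hMN hu)
      have := hx u (hMN hu)
      omega

lemma selection_final {V : Type*} [DecidableEq V] (U : Finset V) (D : V → Finset V) (f : V → ℕ)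
    (p r : ℕ) (hn : r * p + 1 ≤ U.card) (hD : ∀ v ∈ U, D v ⊆ U)
    (hc : ∀ v ∈ U, U.card ≤ (D v).card + p) :
    ∃ (v : ℕ → V), (∀ a < r + 1, v a ∈ U) ∧ (∀ a b, a < b → b < r + 1 → v b ∈ D (v a)) ∧
      U.card * (∑ a ∈ range r, f (v a)) ≤ r * ∑ u ∈ U, f u := by
  obtain ⟨v, N, hNU, hNc, h1, h2, h3, h4⟩ := selection U D f p r hn hD hc r le_rfl
  obtain ⟨x, hxN⟩ : N.Nonempty := card_pos.1 (by omega)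
  refine ⟨Function.update v r x, ?_, ?_, ?_⟩
  · intro a ha
    rcases eq_or_ne a r with rfl | hai
    · rw [Function.update_self]; exact hNU hxN
    · rw [Function.update_of_ne hai]; exact (h2 a (by omega)).1
  · intro a b hab hb
    rw [Function.update_of_ne (by omega : a ≠ r)]
    rcases eq_or_ne b r with rfl | hbi
    · rw [Function.update_self]; exact (h2 a hab).2 hxN
    · rw [Function.update_of_ne hbi]; exact h1 a b hab (by omega)
  · have hsum : ∑ a ∈ range r, f (Function.update v r x a) = ∑ a ∈ range r, f (v a) := by
      apply sum_congr rfl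
      intro a ha
      rw [Function.update_of_ne (by simp at ha; omega)]
    rw [hsum]
    set S := ∑ a ∈ range r, f (v a)
    have e1 : N.card * S ≤ ∑ u ∈ N, r * f u := by
      rw [← smul_eq_mul]
      exact card_nsmul_le_sum _ _ _ h4
    rw [← mul_sum] at e1
    rw [← hNc]
    have := Nat.mul_le_mul_left r h3
    nlinarith

open Classical in
noncomputable def eU {V : Type*} (G : SimpleGraph V) (U : Finset V) : Finset (Sym2 V) :=
  U.sym2.filter (· ∈ G.edgeSet)

open Classical in
noncomputable def cU {V : Type*} (G : SimpleGraph V) (C : Sym2 V → ℕ) (U : Finset V) : Finset ℕ :=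
  (eU G U).image C

open Classical in
noncomputable def nb {V : Type*} (G : SimpleGraph V) (U : Finset V) (v : V) : Finset V :=
  U.filter (G.Adj v)

open Classical in
noncomputable def sat {V : Type*} (G : SimpleGraph V) (C : Sym2 V → ℕ) (U : Finset V) (v : V) :
    Finset ℕ := cU G C U \ cU G C (U.erase v)

lemma mem_eU {V : Type*} {G : SimpleGraph V} {U : Finset V} {x y : V} :
    s(x, y) ∈ eU G U ↔ x ∈ U ∧ y ∈ U ∧ G.Adj x y := by
  simp [eU, and_assoc]

lemma mem_cU {V : Type*} {G : SimpleGraph V} {C : Sym2 V → ℕ} {U : Finset V} {c : ℕ} :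
    c ∈ cU G C U ↔ ∃ x ∈ U, ∃ y ∈ U, G.Adj x y ∧ C s(x, y) = c := by
  unfold cU
  rw [mem_image]
  constructor
  · rintro ⟨e, he, rfl⟩
    induction e with
    | _ x y =>
      obtain ⟨h1, h2, h3⟩ := mem_eU.1 he
      exact ⟨x, h1, y, h2, h3, rfl⟩
  · rintro ⟨x, hx, y, hy, h, rfl⟩
    exact ⟨_, mem_eU.2 ⟨hx, hy, h⟩, rfl⟩

lemma mem_nb {V : Type*} {G : SimpleGraph V} {U : Finset V} {x v : V} :
    x ∈ nb G U v ↔ x ∈ U ∧ G.Adj v x := by simp [nb]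

lemma sat_mem {V : Type*} {G : SimpleGraph V} {C : Sym2 V → ℕ} {U : Finset V} {v x y : V}
    (h : C s(x, y) ∈ sat G C U v) (hx : x ∈ U) (hy : y ∈ U) (hxy : G.Adj x y) :
    v = x ∨ v = y := by
  classical
  by_contra! hne
  unfold sat at h
  rw [mem_sdiff] at h
  exact h.2 (mem_cU.2 ⟨x, by simp [hx, hne.1.symm], y, by simp [hy, hne.2.symm], hxy, rfl⟩)

lemma sat_ex {V : Type*} {G : SimpleGraph V} {C : Sym2 V → ℕ} {U : Finset V} {v : V} {c : ℕ}
    (h : c ∈ sat G C U v) : ∃ u, u ∈ U ∧ G.Adj v u ∧ C s(v, u) = c := by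
  have h' := h
  unfold sat at h
  obtain ⟨x, hx, y, hy, hxy, rfl⟩ := mem_cU.1 (mem_sdiff.1 h).1
  rcases sat_mem h' hx hy hxy with rfl | rfl
  · exact ⟨y, hy, hxy, rfl⟩
  · exact ⟨x, hx, hxy.symm, by rw [Sym2.eq_swap]⟩

open Classical in
lemma eU_card {V : Type*} (G : SimpleGraph V) (U : Finset V) (v : V) :
    (eU G U).card ≤ (eU G (U.erase v)).card + (nb G U v).card := by
  have : eU G U ⊆ eU G (U.erase v) ∪ (nb G U v).image (fun u => s(v, u)) := by
    intro e he
    induction e with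
    | _ x y =>
      obtain ⟨h1, h2, h3⟩ := mem_eU.1 he
      rw [mem_union, mem_eU, mem_image]
      by_cases hx : x = v
      · subst hx; exact Or.inr ⟨y, mem_nb.2 ⟨h2, h3⟩, rfl⟩
      by_cases hy : y = v
      · subst hy; exact Or.inr ⟨x, mem_nb.2 ⟨h1, h3.symm⟩, Sym2.eq_swap⟩
      exact Or.inl ⟨mem_erase.2 ⟨hx, h1⟩, mem_erase.2 ⟨hy, h2⟩, h3⟩
  exact (card_le_card this).trans ((card_union_le _ _).trans
    (Nat.add_le_add_left card_image_le _))

open Classical in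
lemma cU_card {V : Type*} (G : SimpleGraph V) (C : Sym2 V → ℕ) (U : Finset V) (v : V) :
    (cU G C U).card ≤ (cU G C (U.erase v)).card + (sat G C U v).card := by
  rw [add_comm]
  exact card_le_card_sdiff_add_card

lemma nb_card {V : Type*} (G : SimpleGraph V) (U : Finset V) (v : V) (hv : v ∈ U) :
    (nb G U v).card + 1 ≤ U.card := by
  classical
  have : nb G U v ⊆ U.erase v := by
    intro x hx
    obtain ⟨h1, h2⟩ := mem_nb.1 hx
    exact mem_erase.2 ⟨h2.ne', h1⟩
  have := card_le_card this
  rw [card_erase_of_mem hv] at this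
  have := card_pos.2 ⟨v, hv⟩
  omega

lemma sat_card {V : Type*} (G : SimpleGraph V) (C : Sym2 V → ℕ) (U : Finset V) (v : V) :
    (sat G C U v).card ≤ (nb G U v).card := by
  classical
  have : sat G C U v ⊆ (nb G U v).image (fun u => C s(v, u)) := by
    intro c hc
    obtain ⟨u, h1, h2, h3⟩ := sat_ex hc
    exact mem_image.2 ⟨u, mem_nb.2 ⟨h1, h2⟩, h3⟩
  exact (card_le_card this).trans card_image_le

lemma exists_D {V : Type*} (G : SimpleGraph V) (C : Sym2 V → ℕ) (U : Finset V) :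
    ∃ D : V → Finset V, (∀ v, ∀ u ∈ D v, u ∈ U ∧ G.Adj v u ∧ C s(v, u) ∈ sat G C U v) ∧
      (∀ v, ∀ u ∈ D v, ∀ w ∈ D v, C s(v, u) = C s(v, w) → u = w) ∧
      (∀ v, ∀ c ∈ sat G C U v, ∃ u ∈ D v, C s(v, u) = c) ∧
      ∀ v, (D v).card = (sat G C U v).card := by
  classical
  have h : ∀ v : V, ∃ g : ℕ → V, ∀ c ∈ sat G C U v, g c ∈ U ∧ G.Adj v (g c) ∧ C s(v, g c) = c := by
    intro v
    have : ∀ c : ℕ, ∃ u, c ∈ sat G C U v → u ∈ U ∧ G.Adj v u ∧ C s(v, u) = c := by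
      intro c
      by_cases hc : c ∈ sat G C U v
      · obtain ⟨u, hu⟩ := sat_ex hc
        exact ⟨u, fun _ => hu⟩
      · exact ⟨v, fun h => absurd h hc⟩
    choose g hg using this
    exact ⟨g, hg⟩
  choose g hg using h
  refine ⟨fun v => (sat G C U v).image (g v), ?_, ?_, ?_, ?_⟩
  · intro v u hu
    obtain ⟨c, hc, rfl⟩ := mem_image.1 hu
    obtain ⟨h1, h2, h3⟩ := hg v c hc
    exact ⟨h1, h2, h3.symm ▸ hc⟩
  · intro v u hu w hw he
    obtain ⟨c, hc, rfl⟩ := mem_image.1 hu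
    obtain ⟨d, hd, rfl⟩ := mem_image.1 hw
    rw [(hg v c hc).2.2, (hg v d hd).2.2] at he
    rw [he]
  · intro v c hc
    exact ⟨g v c, mem_image_of_mem _ hc, (hg v c hc).2.2⟩
  · intro v
    apply card_image_of_injOn
    intro c hc d hd he
    rw [← (hg v c hc).2.2, ← (hg v d hd).2.2, he]

/-- wasted edges at v -/
noncomputable def wst {V : Type*} (G : SimpleGraph V) (C : Sym2 V → ℕ) (U : Finset V)
    (D : V → Finset V) (v : V) : Finset V := by
  classical
  exact U.filter (fun u => G.Adj v u ∧ C s(v, u) ∈ sat G C U v ∧ u ∉ D v)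

lemma mem_wst {V : Type*} {G : SimpleGraph V} {C : Sym2 V → ℕ} {U : Finset V}
    {D : V → Finset V} {v u : V} : u ∈ wst G C U D v ↔
      u ∈ U ∧ G.Adj v u ∧ C s(v, u) ∈ sat G C U v ∧ u ∉ D v := by
  simp [wst]

lemma wst_bound {V : Type*} (G : SimpleGraph V) (C : Sym2 V → ℕ) (U : Finset V)
    (D : V → Finset V)
    (h1 : ∀ v, ∀ u ∈ D v, u ∈ U ∧ G.Adj v u ∧ C s(v, u) ∈ sat G C U v)
    (h3 : ∀ v, ∀ c ∈ sat G C U v, ∃ u ∈ D v, C s(v, u) = c) :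
    (∑ v ∈ U, (wst G C U D v).card = 0 ∨
      ∑ v ∈ U, (D v).card + 2 * ∑ v ∈ U, (wst G C U D v).card < ∑ v ∈ U, (nb G U v).card) := by
  classical
  let R : V → V → Prop := fun u v => G.Adj u v ∧ C s(u, v) ∈ sat G C U u ∧ C s(u, v) ∉ sat G C U v
  have hcount : ∑ v ∈ U, (U.filter (fun u => R u v)).card
      = ∑ u ∈ U, (U.filter (fun v => R u v)).card :=
    (sum_card_bipartiteAbove_eq_sum_card_bipartiteBelow R).symm
  have key : ∀ v ∈ U, (D v).card + (wst G C U D v).card + (U.filter (fun u => R u v)).card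
      ≤ (nb G U v).card := by
    intro v hv
    have d1 : Disjoint (D v) (wst G C U D v) := by
      rw [disjoint_left]; intro x hx hx'; exact (mem_wst.1 hx').2.2.2 hx
    have d2 : Disjoint (D v ∪ wst G C U D v) (U.filter (fun u => R u v)) := by
      rw [disjoint_left]; intro x hx hx'
      have hR := (mem_filter.1 hx').2.2.2
      rw [Sym2.eq_swap] at hR
      rcases mem_union.1 hx with h | h
      · exact hR (h1 v x h).2.2
      · exact hR (mem_wst.1 h).2.2.1
    rw [← card_union_of_disjoint d1, ← card_union_of_disjoint d2]
    apply card_le_card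
    intro x hx
    rw [mem_nb]
    rcases mem_union.1 hx with h | h
    · rcases mem_union.1 h with h | h
      · exact ⟨(h1 v x h).1, (h1 v x h).2.1⟩
      · exact ⟨(mem_wst.1 h).1, (mem_wst.1 h).2.1⟩
    · exact ⟨(mem_filter.1 h).1, (mem_filter.1 h).2.1.symm⟩
  -- out-star edges
  have uniq : ∀ u ∈ U, ∀ v ∈ U, ∀ w ∈ U, G.Adj u v → G.Adj u w → C s(u, v) = C s(u, w) →
      v ≠ w → C s(u, v) ∉ sat G C U v := by
    intro u hu v hv w hw huv huw he hne hs
    rw [he] at hs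
    rcases sat_mem hs hu hw huw with h | h
    · exact huv.ne h.symm
    · exact hne h
  have sub : ∀ u ∈ U, ∀ v ∈ wst G C U D u, ∃ w ∈ D u, w ∈ U.filter (fun v => R u v) ∧
      v ∈ U.filter (fun v => R u v) := by
    intro u hu v hv
    obtain ⟨hvU, ha, hs, hnD⟩ := mem_wst.1 hv
    obtain ⟨w, hw, hwc⟩ := h3 u _ hs
    obtain ⟨hwU, hwa, hws⟩ := h1 u w hw
    have hne : v ≠ w := by rintro rfl; exact hnD hw
    refine ⟨w, hw, mem_filter.2 ⟨hwU, hwa, hws, ?_⟩, mem_filter.2 ⟨hvU, ha, hs, ?_⟩⟩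
    · exact uniq u hu w hwU v hvU hwa ha hwc hne.symm
    · exact uniq u hu v hvU w hwU ha hwa hwc.symm hne
  have le1 : ∀ u ∈ U, (wst G C U D u).card ≤ (U.filter (fun v => R u v)).card := by
    intro u hu
    apply card_le_card
    intro v hv
    obtain ⟨w, _, _, h⟩ := sub u hu v hv
    exact h
  by_cases h0 : ∑ v ∈ U, (wst G C U D v).card = 0
  · exact Or.inl h0
  right
  obtain ⟨u, hu, hne⟩ := exists_ne_zero_of_sum_ne_zero h0
  obtain ⟨v, hv⟩ := card_ne_zero.1 hne
  have lt1 : (wst G C U D u).card < (U.filter (fun v => R u v)).card := by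
    apply card_lt_card
    rw [ssubset_iff_of_subset]
    · obtain ⟨w, hw, hw', _⟩ := sub u hu v hv
      exact ⟨w, hw', fun h => (mem_wst.1 h).2.2.2 hw⟩
    · intro v hv
      obtain ⟨w, _, _, h⟩ := sub u hu v hv
      exact h
  have := sum_lt_sum le1 ⟨u, hu, lt1⟩
  have k2 := sum_le_sum key
  simp only [sum_add_distrib] at k2
  omega

lemma rainbow_of_seq {V : Type*} [DecidableEq V] (G : SimpleGraph V) (C : Sym2 V → ℕ) (v : ℕ → V)
    (K : ℕ) (hadj : ∀ a b, a < b → b < K → G.Adj (v a) (v b))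
    (hinj : ∀ a b c d, a < b → b < K → c < d → d < K → C s(v a, v b) = C s(v c, v d) →
      a = c ∧ b = d) :
    ((range K).image v).card = K ∧ IsRainbowClique G C ((range K).image v) := by
  have hne : ∀ a < K, ∀ b < K, v a = v b → a = b := by
    intro a ha b hb he
    rcases lt_trichotomy a b with h | h | h
    · exact absurd he (hadj a b h hb).ne
    · exact h
    · exact absurd he.symm (hadj b a h ha).ne
  refine ⟨?_, ?_, ?_⟩
  · rw [card_image_of_injOn, card_range]
    intro a ha b hb he
    exact hne a (by simpa using ha) b (by simpa using hb) he
  · intro x hx y hy hxy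
    obtain ⟨a, ha, rfl⟩ := mem_image.1 hx
    obtain ⟨b, hb, rfl⟩ := mem_image.1 hy
    rw [mem_range] at ha hb
    rcases lt_trichotomy a b with h | h | h
    · exact hadj a b h hb
    · subst h; exact absurd rfl hxy
    · exact (hadj b a h ha).symm
  · intro x hx y hy z hz w hw hxy hzw he
    obtain ⟨a, ha, rfl⟩ := mem_image.1 hx
    obtain ⟨b, hb, rfl⟩ := mem_image.1 hy
    obtain ⟨c, hc, rfl⟩ := mem_image.1 hz
    obtain ⟨d, hd, rfl⟩ := mem_image.1 hw
    rw [mem_range] at ha hb hc hd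
    have wl : ∀ a < K, ∀ b < K, v a ≠ v b → ∃ a' b', a' < b' ∧ b' < K ∧
        s(v a, v b) = s(v a', v b') := by
      intro a ha b hb h
      rcases lt_trichotomy a b with h' | h' | h'
      · exact ⟨a, b, h', hb, rfl⟩
      · subst h'; exact absurd rfl h
      · exact ⟨b, a, h', ha, Sym2.eq_swap⟩
    obtain ⟨a', b', h1, h2, e1⟩ := wl a ha b hb hxy
    obtain ⟨c', d', h3, h4, e2⟩ := wl c hc d hd hzw
    rw [e1, e2] at he ⊢
    obtain ⟨rfl, rfl⟩ := hinj _ _ _ _ h1 h2 h3 h4 he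
    rfl

lemma rainbow_ext {V : Type*} [DecidableEq V] (G : SimpleGraph V) (C : Sym2 V → ℕ) (U : Finset V)
    (D : V → Finset V)
    (h1 : ∀ v, ∀ u ∈ D v, u ∈ U ∧ G.Adj v u ∧ C s(v, u) ∈ sat G C U v)
    (h2 : ∀ v, ∀ u ∈ D v, ∀ w ∈ D v, C s(v, u) = C s(v, w) → u = w)
    (v : ℕ → V) (r i : ℕ) (hU : ∀ a < r + 2, v a ∈ U)
    (hv : ∀ a b, a < b → b < r + 2 → v b ∈ D (v a) ∨ (G.Adj (v a) (v b) ∧ b = r + 1 ∧ a = i ∧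
      (i = r ∨ C s(v a, v b) ∉ sat G C U (v a)))) :
    ((range (r + 2)).image v).card = r + 2 ∧ IsRainbowClique G C ((range (r + 2)).image v) := by
  have hadj : ∀ a b, a < b → b < r + 2 → G.Adj (v a) (v b) := by
    intro a b hab hb
    rcases hv a b hab hb with h | h
    · exact (h1 _ _ h).2.1
    · exact h.1
  have hne : ∀ a < r + 2, ∀ b < r + 2, v a = v b → a = b := by
    intro a ha b hb he
    rcases lt_trichotomy a b with h | h | h
    · exact absurd he (hadj a b h hb).ne
    · exact h
    · exact absurd he.symm (hadj b a h ha).ne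
  have hlp : ∀ a b c d, a < b → b < r + 2 → c < d → d < r + 2 →
      C s(v a, v b) = C s(v c, v d) → v d ∈ D (v c) → c = a ∨ c = b := by
    intro a b c d hab hb hcd hd he hD
    have hs := (h1 _ _ hD).2.2
    rw [← he] at hs
    rcases sat_mem hs (hU a (by omega)) (hU b hb) (hadj a b hab hb) with h | h
    · exact Or.inl (hne _ (by omega) _ (by omega) h)
    · exact Or.inr (hne _ (by omega) _ (by omega) h)
  have hEN : ∀ a b c d, a < b → b < r + 2 → c < d → d < r + 2 →
      C s(v a, v b) = C s(v c, v d) → v d ∈ D (v c) → (b = r + 1 ∧ a = i ∧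
      (i = r ∨ C s(v a, v b) ∉ sat G C U (v a))) → a = c ∧ b = d := by
    rintro a b c d hab hb hcd hd he hD ⟨h3, h4, h5⟩
    rcases hlp a b c d hab hb hcd hd he hD with h | h
    · subst h
      rcases h5 with h5 | h5
      · omega
      · exact absurd (he ▸ (h1 _ _ hD).2.2) h5
    · omega
  refine rainbow_of_seq G C v (r + 2) hadj ?_
  intro a b c d hab hb hcd hd he
  rcases hv a b hab hb with h | h <;> rcases hv c d hcd hd with h' | h'
  · have e1 := hlp a b c d hab hb hcd hd he h'
    have e2 := hlp c d a b hcd hd hab hb he.symm h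
    have e3 : a = c := by omega
    subst e3
    exact ⟨rfl, hne _ hb _ hd (h2 _ _ h _ h' he)⟩
  · have := hEN c d a b hcd hd hab hb he.symm h h'.2
    omega
  · exact hEN a b c d hab hb hcd hd he h' h.2
  · omega

lemma core {V : Type*} [DecidableEq V] (G : SimpleGraph V) (C : Sym2 V → ℕ) (U : Finset V)
    (r p : ℕ) (hr : 2 ≤ r) (hp : 1 ≤ p) (hn : r * p + 1 ≤ U.card) (hn2 : r + 3 ≤ U.card)
    (hdeg : ∀ v ∈ U, 2 * U.card ≤ (nb G U v).card + (sat G C U v).card + p + 1) :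
    ∃ S ⊆ U, S.card = r + 2 ∧ IsRainbowClique G C S := by
  haveI := Classical.decRel G.Adj
  obtain ⟨D, h1, h2, h3, h4⟩ := exists_D G C U
  have hDU : ∀ v, D v ⊆ U := fun v u hu => (h1 v u hu).1
  have hnb : ∀ v, nb G U v ⊆ U := fun v u hu => (mem_nb.1 hu).1
  obtain ⟨v, hvU, hvD, hvS⟩ := selection_final U D (fun v => (wst G C U D v).card) p r hn
    (fun v _ => hDU v) (by
      intro v hv
      have := hdeg v hv
      have := nb_card G U v hv
      rw [h4]; omega)
  set S := ∑ a ∈ range r, (wst G C U D (v a)).card with hS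
  set W := ∑ u ∈ U, (wst G C U D u).card with hW
  -- bound on S
  have hSlt : S + (r + 1) * (p + 1) < 2 * U.card := by
    rcases wst_bound G C U D h1 h3 with h0 | hlt
    · rw [← hW] at h0
      have hS0 : S = 0 := by
        rw [h0] at hvS
        simp at hvS
        rcases hvS with h | h
        · subst h; simp at hn2
        · exact h
      rw [hS0]
      rcases Nat.lt_or_ge p 2 with h | h
      · have : p = 1 := by omega
        subst this; omega
      · nlinarith
    · rw [← hW] at hlt
      have e1 : ∑ v ∈ U, 2 * U.card ≤ ∑ v ∈ U, ((nb G U v).card + (D v).card + p + 1) :=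
        sum_le_sum (fun v hv => by rw [h4]; exact hdeg v hv)
      have e2 : ∑ v ∈ U, ((nb G U v).card + 1) ≤ ∑ v ∈ U, U.card :=
        sum_le_sum (fun v hv => nb_card G U v hv)
      simp only [sum_add_distrib, sum_const, smul_eq_mul] at e1 e2
      have e3 : 2 * W + U.card < U.card * p := by nlinarith
      have e4 : U.card * (2 * S + r) < U.card * (r * p) := by nlinarith
      have e5 := lt_of_mul_lt_mul_left e4 (Nat.zero_le _)
      nlinarith
  -- counting
  by_contra hno
  set x : V → ℕ := fun w => ((range (r + 1)).filter (fun a => w ∉ D (v a))).card with hx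
  set y : V → ℕ := fun w => ((range (r + 1)).filter (fun a => w ≠ v a ∧ ¬ G.Adj (v a) w)).card
    with hy
  have hsumx : ∑ w ∈ U, x w = ∑ a ∈ range (r + 1), (U.filter (fun w => w ∉ D (v a))).card :=
    sum_card_bipartiteAbove_eq_sum_card_bipartiteBelow (fun w a => w ∉ D (v a))
  have hsumy : ∑ w ∈ U, y w
      = ∑ a ∈ range (r + 1), (U.filter (fun w => w ≠ v a ∧ ¬ G.Adj (v a) w)).card :=
    sum_card_bipartiteAbove_eq_sum_card_bipartiteBelow (fun w a => w ≠ v a ∧ ¬ G.Adj (v a) w)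
  have hub : ∑ w ∈ U, (x w + y w) ≤ (r + 1) * p := by
    rw [sum_add_distrib, hsumx, hsumy, ← sum_add_distrib]
    calc _ ≤ ∑ a ∈ range (r + 1), p := ?_
      _ = _ := by simp
    apply sum_le_sum
    intro a ha
    have hva := hvU a (mem_range.1 ha)
    have e1 : (U.filter (fun w => w ∉ D (v a))).card + (D (v a)).card = U.card := by
      rw [← card_sdiff_add_card_eq_card (hDU (v a)), sdiff_eq_filter]
    have e2 : (U.filter (fun w => w ≠ v a ∧ ¬ G.Adj (v a) w)).card + (nb G U (v a)).card + 1
        = U.card := by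
      have : U.filter (fun w => w ≠ v a ∧ ¬ G.Adj (v a) w) = (U \ nb G U (v a)).erase (v a) := by
        ext w; simp [mem_nb]; tauto
      rw [this, card_erase_of_mem (by simp [hva, mem_nb])]
      have e3 := card_sdiff_add_card_eq_card (hnb (v a))
      have e4 : 0 < (U \ nb G U (v a)).card := card_pos.2 ⟨v a, by simp [hva, mem_nb]⟩
      omega
    have := hdeg _ hva
    rw [← h4] at this
    omega
  set A := (range (r + 1)).image v with hA
  have hAU : A ⊆ U := by
    intro w hw
    obtain ⟨a, ha, rfl⟩ := mem_image.1 hw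
    exact hvU a (mem_range.1 ha)
  have hAc : A.card ≤ r + 1 := by
    simpa using card_image_le (s := range (r + 1)) (f := v)
  set Bd := (range r).biUnion (fun a => wst G C U D (v a)) with hBd
  have hBc : Bd.card ≤ S := card_biUnion_le
  have hlow : ∀ w ∈ U, 2 ≤ x w + y w + (if w ∈ A then 1 else 0) + (if w ∈ Bd then 1 else 0) := by
    intro w hw
    by_cases hwA : w ∈ A
    · rw [if_pos hwA]
      obtain ⟨a, ha, rfl⟩ := mem_image.1 hwA
      have : 0 < x (v a) := card_pos.2 ⟨a, mem_filter.2 ⟨ha, fun h => (h1 _ _ h).2.1.ne rfl⟩⟩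
      omega
    by_cases hwB : w ∈ Bd
    · rw [if_pos hwB]
      have hxy : 0 < x w := by
        obtain ⟨a, ha, h⟩ := mem_biUnion.1 hwB
        exact card_pos.2 ⟨a, mem_filter.2 ⟨mem_range.2 (by rw [mem_range] at ha; omega),
          (mem_wst.1 h).2.2.2⟩⟩
      omega
    rw [if_neg hwA, if_neg hwB]
    by_contra hlt
    have hyx : y w ≤ x w := by
      apply card_le_card
      intro a ha
      rw [mem_filter] at ha ⊢
      exact ⟨ha.1, fun h => ha.2.2 (h1 _ _ h).2.1⟩
    have hy0 : y w = 0 := by omega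
    have hx1 : x w ≤ 1 := by omega
    have hadj : ∀ a < r + 1, G.Adj (v a) w := by
      intro a ha
      by_contra hna
      have : 0 < y w := card_pos.2 ⟨a, mem_filter.2 ⟨mem_range.2 ha,
        fun h => hwA (h ▸ mem_image_of_mem v (mem_range.2 ha)), hna⟩⟩
      omega
    obtain ⟨i, hi⟩ : ∃ i, ∀ a < r + 1, w ∉ D (v a) → a = i := by
      by_cases hex : ∃ i < r + 1, w ∉ D (v i)
      · obtain ⟨i, hi, hiD⟩ := hex
        refine ⟨i, fun a ha haD => ?_⟩
        exact card_le_one.1 hx1 a (mem_filter.2 ⟨mem_range.2 ha, haD⟩) i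
          (mem_filter.2 ⟨mem_range.2 hi, hiD⟩)
      · push Not at hex
        exact ⟨0, fun a ha h => absurd (hex a ha) h⟩
    apply hno
    have hlt' : ∀ a, a < r + 1 → Function.update v (r + 1) w a = v a :=
      fun a ha => Function.update_of_ne (by omega) _ _
    have hU' : ∀ a < r + 2, Function.update v (r + 1) w a ∈ U := by
      intro a ha
      rcases Nat.lt_or_ge a (r + 1) with h | h
      · rw [hlt' a h]; exact hvU a h
      · have : a = r + 1 := by omega
        subst this; simpa using hw
    refine ⟨(range (r + 2)).image (Function.update v (r + 1) w), ?_,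
      rainbow_ext G C U D h1 h2 _ r i hU' ?_⟩
    · intro z hz
      obtain ⟨a, ha, rfl⟩ := mem_image.1 hz
      exact hU' a (mem_range.1 ha)
    · intro a b hab hb
      rw [hlt' a (by omega)]
      rcases Nat.lt_or_ge b (r + 1) with h | h
      · rw [hlt' b h]; exact Or.inl (hvD a b hab h)
      · have : b = r + 1 := by omega
        subst this
        rw [Function.update_self]
        by_cases hD : w ∈ D (v a)
        · exact Or.inl hD
        · have hai := hi a hab hD
          refine Or.inr ⟨hadj a hab, rfl, hai, ?_⟩
          by_cases har : a = r
          · exact Or.inl (by omega)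
          · right
            intro hs
            exact hwB (mem_biUnion.2 ⟨a, mem_range.2 (by omega),
              mem_wst.2 ⟨hw, hadj a hab, hs, hD⟩⟩)
  have hs := sum_le_sum hlow
  rw [sum_add_distrib, sum_add_distrib, sum_const, smul_eq_mul, ← card_filter, ← card_filter] at hs
  have g1 : (U.filter (· ∈ A)).card ≤ r + 1 :=
    (card_le_card (fun z hz => (mem_filter.1 hz).2)).trans hAc
  have g2 : (U.filter (· ∈ Bd)).card ≤ S :=
    (card_le_card (fun z hz => (mem_filter.1 hz).2)).trans hBc
  nlinarith

lemma full_rainbow {V : Type*} [DecidableEq V] (G : SimpleGraph V) (C : Sym2 V → ℕ) (U : Finset V)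
    (h : 2 * U.card.choose 2 ≤ (eU G U).card + (cU G C U).card) : IsRainbowClique G C U := by
  classical
  set K := eU (⊤ : SimpleGraph V) U with hK
  have hKc : K.card ≤ U.card.choose 2 := by
    have : K = U.sym2.filter (fun e => ¬ e.IsDiag) := by
      ext e
      induction e with
      | _ x y => simp [hK, eU]
    have h2 := Sym2.card_image_offDiag U
    rw [← h2]
    apply card_le_card
    intro e he
    induction e with
    | _ x y =>
      obtain ⟨a, b, c⟩ := mem_eU.1 he
      exact mem_image.2 ⟨(x, y), mem_offDiag.2 ⟨a, b, c⟩, rfl⟩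
  have hsub : eU G U ⊆ K := by
    intro e he
    induction e with
    | _ x y =>
      obtain ⟨a, b, c⟩ := mem_eU.1 he
      exact mem_eU.2 ⟨a, b, c.ne⟩
  have hle := card_le_card hsub
  have hcle : (cU G C U).card ≤ (eU G U).card := card_image_le
  have heq : eU G U = K := eq_of_subset_of_card_le hsub (by omega)
  have hinj : Set.InjOn C (eU G U : Set (Sym2 V)) := by
    apply card_image_iff.1
    change (cU G C U).card = _
    omega
  have hadj : ∀ u ∈ U, ∀ v ∈ U, u ≠ v → s(u, v) ∈ eU G U := by
    intro u hu v hv huv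
    rw [heq]; exact mem_eU.2 ⟨hu, hv, huv⟩
  refine ⟨fun u hu v hv huv => (mem_eU.1 (hadj u hu v hv huv)).2.2, ?_⟩
  intro u hu v hv x hx y hy huv hxy he
  exact hinj (hadj u hu v hv huv) (hadj x hx y hy hxy) he

lemma exists_rainbow {V : Type*} [DecidableEq V] (G : SimpleGraph V) (C : Sym2 V → ℕ)
    (r : ℕ) (hr : 2 ≤ r) (n : ℕ) (hn : r + 2 ≤ n) : ∀ U : Finset V, U.card = n →
    n.choose 2 + turanEdges n r + 2 ≤ (eU G U).card + (cU G C U).card →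
    ∃ S ⊆ U, S.card = r + 2 ∧ IsRainbowClique G C S := by
  classical
  induction n, hn using Nat.le_induction with
  | base =>
    intro U hU h
    have := te_base r hr
    exact ⟨U, Subset.rfl, hU, full_rainbow G C U (by rw [hU]; omega)⟩
  | succ n hn ih =>
    intro U hU h
    by_cases hdeg : ∀ v ∈ U, 2 * U.card ≤ (nb G U v).card + (sat G C U v).card + n / r + 1
    · have hp : 1 ≤ n / r := Nat.div_pos (by omega) (by omega)
      refine core G C U r (n / r) hr hp ?_ (by omega) hdeg
      rw [hU]
      have := Nat.mul_div_le n r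
      omega
    · push Not at hdeg
      obtain ⟨v, hv, hlt⟩ := hdeg
      have e1 := eU_card G U v
      have e2 := cU_card G C U v
      have e3 := te_succ r (by omega) n
      have e4 := Nat.choose_succ_succ' n 1
      have e5 : (U.erase v).card = n := by rw [card_erase_of_mem hv]; omega
      have e6 : n / r ≤ n := Nat.div_le_self _ _
      simp at e4
      have e7 : eU G (U.erase v) = eU G (@Finset.erase V (fun a b => Classical.propDecidable (a = b)) U v) := by
        congr!
      obtain ⟨S, hS, hS'⟩ := ih (U.erase v) e5 (by
        have e8 : (eU G U).card ≤ (eU G (U.erase v)).card + (nb G U v).card := by convert e1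
        have e9 : (cU G C U).card ≤ (cU G C (U.erase v)).card + (sat G C U v).card := by convert e2
        omega)
      exact ⟨S, hS.trans (erase_subset _ _), hS'⟩

lemma remove_set {V : Type*} [DecidableEq V] (G : SimpleGraph V) (C : Sym2 V → ℕ) (j : ℕ) :
    ∀ U S : Finset V, S ⊆ U → S.card = j →
    (eU G U).card + (cU G C U).card + 2 * (U.card - j).choose 2 ≤
      (eU G (U \ S)).card + (cU G C (U \ S)).card + 2 * U.card.choose 2 := by
  induction j with
  | zero =>
    intro U S _ hS
    rw [card_eq_zero] at hS
    subst hS; simp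
  | succ j ih =>
    intro U S hSU hS
    obtain ⟨v, hv⟩ : S.Nonempty := card_pos.1 (by omega)
    have e0 : U \ S = (U.erase v) \ (S.erase v) := by
      ext z; simp; grind
    have e1 := ih (U.erase v) (S.erase v) (erase_subset_erase _ hSU)
      (by rw [card_erase_of_mem hv]; omega)
    have hvU := hSU hv
    have e2 : (eU G U).card ≤ (eU G (U.erase v)).card + (nb G U v).card := by
      convert eU_card G U v
    have e3 : (cU G C U).card ≤ (cU G C (U.erase v)).card + (sat G C U v).card := by
      convert cU_card G C U v
    have e4 := sat_card G C U v
    have e5 := nb_card G U v hvU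
    rw [card_erase_of_mem hvU] at e1
    obtain ⟨n, hn⟩ : ∃ n, U.card = n + 1 := ⟨U.card - 1, by omega⟩
    have e6 := Nat.choose_succ_succ' n 1
    rw [← e0, hn] at e1
    rw [hn] at e5 ⊢
    have e7 : n + 1 - (j + 1) = n + 1 - 1 - j := by omega
    rw [e7]
    simp at e6 e1 ⊢
    omega

lemma te_mono (r : ℕ) (hr : 1 ≤ r) (N j : ℕ) :
    turanEdges (N + j) r + N.choose 2 ≤ turanEdges N r + (N + j).choose 2 := by
  induction j with
  | zero => simp
  | succ j ih =>
    have e3 := te_succ r hr (N + j)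
    have e4 := Nat.choose_succ_succ' (N + j) 1
    simp at e4
    rw [← add_assoc, e4]
    have e5 : 0 ≤ (N + j) / r := Nat.zero_le _
    generalize (N + j) / r = q at *
    omega

lemma greedy {V : Type*} [DecidableEq V] (G : SimpleGraph V) (C : Sym2 V → ℕ)
    (r : ℕ) (hr : 2 ≤ r) (N : ℕ) (hN : r + 2 ≤ N) (m : ℕ) : ∀ U : Finset V,
    U.card = N + (r + 2) * m →
    N.choose 2 + turanEdges N r + 2 + 2 * U.card.choose 2 ≤
      (eU G U).card + (cU G C U).card + 2 * N.choose 2 →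
    ∃ S : Fin (m + 1) → Finset V, (∀ i, S i ⊆ U ∧ (S i).card = r + 2) ∧
      (∀ i, IsRainbowClique G C (S i)) ∧ ∀ i j, i ≠ j → Disjoint (S i) (S j) := by
  induction m with
  | zero =>
    intro U hU h
    simp at hU
    rw [hU] at h
    obtain ⟨S, hS, hc, hR⟩ := exists_rainbow G C r hr N hN U hU (by omega)
    refine ⟨fun _ => S, fun _ => ⟨hS, hc⟩, fun _ => hR, fun i j hij => ?_⟩
    exact absurd (Subsingleton.elim (α := Fin 1) i j) hij
  | succ m ih =>
    intro U hU h
    have hmono := te_mono r (by omega) N ((r + 2) * (m + 1))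
    rw [← hU] at hmono
    have hNU : N.choose 2 ≤ U.card.choose 2 := Nat.choose_le_choose 2 (by omega)
    obtain ⟨S, hS, hc, hR⟩ := exists_rainbow G C r hr U.card (by omega) U rfl (by omega)
    have hrem := remove_set G C (r + 2) U S hS hc
    have hc' : (U \ S).card = U.card - (r + 2) := by rw [card_sdiff_of_subset hS, hc]
    rw [← hc'] at hrem
    obtain ⟨T, hT1, hT2, hT3⟩ := ih (U \ S) (by rw [hc', hU, mul_add]; omega) (by omega)
    have hdis : ∀ i, Disjoint S (T i) := fun i =>
      disjoint_of_subset_right (hT1 i).1 disjoint_sdiff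
    refine ⟨Fin.cons S T, ?_, ?_, ?_⟩
    · intro i
      refine Fin.cases ?_ (fun i => ?_) i
      · exact ⟨hS, hc⟩
      · exact ⟨(hT1 i).1.trans sdiff_subset, (hT1 i).2⟩
    · intro i
      refine Fin.cases ?_ (fun i => ?_) i
      · exact hR
      · exact hT2 i
    · intro i j
      refine Fin.cases ?_ (fun i => ?_) i <;> refine Fin.cases ?_ (fun j => ?_) j
      · intro h; exact absurd rfl h
      · intro _; exact hdis j
      · intro _; exact (hdis i).symm
      · intro h
        exact hT3 i j (fun e => h (by rw [e]))

end aux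

/-- If `k ≥ 4`, `m ≥ 1`, `n ≥ km` and
`e(G) + c(G) ≥ C(n-k(m-1), 2) + t_{n-k(m-1),k-2} + 2 + k(m-1)(2n-1) - k²(m-1)²`,
then `G` contains `m` pairwise vertex-disjoint rainbow copies of `K_k`. -/
theorem disjoint_rainbow_cliques_of_edges_add_colors {V : Type*} [Fintype V] (n k m : ℕ)
    (hk : 4 ≤ k) (hm : 1 ≤ m) (hV : Fintype.card V = n) (hn : k * m ≤ n)
    (G : SimpleGraph V) (C : Sym2 V → ℕ)
    (h : Nat.card G.edgeSet + Nat.card (C '' G.edgeSet)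
      ≥ (n - k * (m - 1)).choose 2 + turanEdges (n - k * (m - 1)) (k - 2) + 2
        + (k * (m - 1) * (2 * n - 1) - k ^ 2 * (m - 1) ^ 2)) :
    ∃ S : Fin m → Finset V, (∀ i, (S i).card = k) ∧ (∀ i, IsRainbowClique G C (S i)) ∧
      ∀ i j, i ≠ j → Disjoint (S i) (S j) := by
  classical
  obtain ⟨r, rfl⟩ := Nat.exists_eq_add_of_le' (show 2 ≤ k by omega)
  obtain ⟨m, rfl⟩ := Nat.exists_eq_add_of_le' hm
  obtain ⟨N, hN⟩ : ∃ N, n = N + (r + 2) * m :=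
    ⟨n - (r + 2) * m, by rw [mul_add] at hn; omega⟩
  have hN2 : r + 2 ≤ N := by rw [mul_add] at hn; omega
  have he : (G.edgeSet : Set (Sym2 V)) = (eU G Finset.univ : Set (Sym2 V)) := by
    ext e; simp [eU]
  have h1 : Nat.card G.edgeSet = (eU G Finset.univ).card := by
    rw [he]; simp
  have h2 : Nat.card (C '' G.edgeSet) = (cU G C Finset.univ).card := by
    rw [he, ← Finset.coe_image]; simp [cU]
  rw [h1, h2] at h
  have hs1 : m + 1 - 1 = m := rfl
  have hs2 : r + 2 - 2 = r := rfl
  rw [hs1, hs2] at h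
  have hs3 : n - (r + 2) * m = N := by omega
  rw [hs3] at h
  have harith : 2 * n.choose 2 = 2 * N.choose 2 +
      ((r + 2) * m * (2 * n - 1) - (r + 2) ^ 2 * m ^ 2) := by
    have ch : ∀ x : ℕ, 2 * (x + 1).choose 2 = (x + 1) * x := by
      intro x
      rw [Nat.choose_two_right]
      have := (Nat.even_mul_pred_self (x + 1)).two_dvd
      rw [Nat.mul_div_cancel' this]; rfl
    obtain ⟨M, rfl⟩ := Nat.exists_eq_add_of_le' (show 1 ≤ N by omega)
    generalize ha : (r + 2) * m = a at *
    have : (r + 2) ^ 2 * m ^ 2 = a ^ 2 := by rw [← ha]; ring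
    rw [this, hN, show M + 1 + a = (M + a) + 1 by ring, ch, ch,
      show 2 * (M + a + 1) - 1 = 2 * (M + a) + 1 by omega]
    have : a * (2 * (M + a) + 1) = (a ^ 2 + a + 2 * M * a) + a ^ 2 := by ring
    rw [this, Nat.add_sub_cancel]
    ring
  obtain ⟨S, hS1, hS2, hS3⟩ := greedy G C r (by omega) N hN2 m Finset.univ
    (by rw [Finset.card_univ, hV, hN]) (by rw [Finset.card_univ, hV]; omega)
  exact ⟨S, fun i => (hS1 i).2, hS2, hS3⟩
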